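/- Let A and B be lattices with zero. Then A ⊠ B is a capped sub-tensor product of A and B: every element of A ⊠ B is a finitely generated bi-ideal of A × B that is a finite union of pure tensors; A ⊠ B contains all mixed tensors; A ⊠ B is closed under binary intersection; and, ordered by containment, A ⊠ B is a lattice. Moreover, A ⊠ B is the smallest capped sub-tensor product of A and B with respect to containment: every capped sub-tensor product C of A and B satisfies A ⊠ B ⊆ C. -/

import Mathlib

/-!
Everything rests on the identity
`(a ⊗ b) ∩ (c □ d) = ((a ⊓ c) ⊗ b) ∪ (a ⊗ (b ⊓ d))` (`pureT_inter_boxe`),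
whose right-hand side is a mixed tensor. A confined element `H ⊆ a ⊗ b` of the box product is the
intersection of `a ⊗ b` with finitely many boxes. Cutting with one box at a time keeps it a finite
union of pure tensors (`exists_union_of_mem_ltens`), and since boxes are bi-ideals, `H` is a finitely
generated bi-ideal. The same identity writes `H` as a finite intersection of mixed tensors, so `H`
lies in every family of sets that contains the mixed tensors and is closed under intersection; this
gives minimality.

For joins, a finite set `G` lies in `a □ b` iff it splits into a part `S` whose first coordinates are
below `a` and the rest, whose second coordinates are below `b`. Hence the intersection over all
`S ⊆ G` of the boxes `(⋁_{p ∈ S} p.1) □ (⋁_{p ∈ G \ S} p.2)` is the least element of the box product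
containing `G` (`exists_hull`); the choices `S = G` and `S = ∅` confine it. The join of two unions of
pure tensors is the hull of the union of their sets of generators.
-/

variable (A B : Type*) [Lattice A] [OrderBot A] [Lattice B] [OrderBot B]

/-- `⊥_{A,B} = (A × {0}) ∪ ({0} × B)`. -/
def botPairs : Set (A × B) := {p | p.1 = ⊥ ∨ p.2 = ⊥}

/-- A bi-ideal of `A × B`. -/
def IsBiIdeal (I : Set (A × B)) : Prop :=
  (∀ p q : A × B, p.1 ≤ q.1 → p.2 ≤ q.2 → q ∈ I → p ∈ I) ∧
  botPairs A B ⊆ I ∧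
  (∀ (a : A) (b₀ b₁ : B), (a, b₀) ∈ I → (a, b₁) ∈ I → (a, b₀ ⊔ b₁) ∈ I) ∧
  (∀ (a₀ a₁ : A) (b : B), (a₀, b) ∈ I → (a₁, b) ∈ I → (a₀ ⊔ a₁, b) ∈ I)

/-- A finitely generated bi-ideal: the least bi-ideal containing some finite
subset of `A × B`. -/
def IsFGBiIdeal (J : Set (A × B)) : Prop :=
  ∃ F : Finset (A × B),
    IsLeast {I : Set (A × B) | IsBiIdeal A B I ∧ ↑F ⊆ I} J

/-- The pure tensor `a ⊗ b = ⊥_{A,B} ∪ {(x,y) : x ≤ a and y ≤ b}`. -/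
def pureT (a : A) (b : B) : Set (A × B) :=
  {p | p.1 ≤ a ∧ p.2 ≤ b} ∪ botPairs A B

/-- A sub-tensor product of `A` and `B`: a set of finitely generated bi-ideals
containing all mixed tensors, closed under binary intersection, and forming a
lattice with respect to containment. -/
def SubTensorProd (C : Set (Set (A × B))) : Prop :=
  (∀ X ∈ C, IsFGBiIdeal A B X) ∧
  (∀ (a₀ a₁ : A) (b₀ b₁ : B), a₀ ≤ a₁ → b₁ ≤ b₀ →
    pureT A B a₀ b₀ ∪ pureT A B a₁ b₁ ∈ C) ∧
  (∀ X ∈ C, ∀ Y ∈ C, X ∩ Y ∈ C) ∧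
  (∀ X Y : {Z // Z ∈ C}, (∃ z, IsLUB {X, Y} z) ∧ (∃ w, IsGLB {X, Y} w))

/-- A set of bi-ideals is capped if each of its members is a finite union of
pure tensors. -/
def Capped (C : Set (Set (A × B))) : Prop :=
  ∀ X ∈ C, ∃ F : Finset (A × B), X = ⋃ p ∈ F, pureT A B p.1 p.2

/-- `a □ b = {(x,y) : x ≤ a or y ≤ b}`. -/
def boxe (a : A) (b : B) : Set (A × B) := {p | p.1 ≤ a ∨ p.2 ≤ b}

/-- The box product `A □ B`: all finite nonempty intersections `⋂ (aᵢ □ bᵢ)`. -/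
def boxProd : Set (Set (A × B)) :=
  {H | ∃ F : Finset (A × B), F.Nonempty ∧ H = ⋂ p ∈ F, boxe A B p.1 p.2}

/-- The lattice tensor product `A ⊠ B`: the confined elements of `A □ B`
(here, since `A` and `B` have zero, `a ⊠ b = a ⊗ b` is the pure tensor). -/
def ltens : Set (Set (A × B)) :=
  {H | H ∈ boxProd A B ∧ ∃ (a : A) (b : B), H ⊆ pureT A B a b}

variable {A B}

lemma isBiIdeal_boxe (a : A) (b : B) : IsBiIdeal A B (boxe A B a b) := by
  refine ⟨?_, ?_, ?_, ?_⟩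
  · rintro p q h1 h2 (h | h)
    · exact Or.inl (h1.trans h)
    · exact Or.inr (h2.trans h)
  · rintro p (h | h)
    · exact Or.inl (h ▸ bot_le)
    · exact Or.inr (h ▸ bot_le)
  · rintro x y₀ y₁ (h | h) (h' | h')
    · exact Or.inl h
    · exact Or.inl h
    · exact Or.inl h'
    · exact Or.inr (sup_le h h')
  · rintro x₀ x₁ y (h | h) (h' | h')
    · exact Or.inl (sup_le h h')
    · exact Or.inr h'
    · exact Or.inr h
    · exact Or.inr h

lemma isBiIdeal_of_mem_boxProd {H : Set (A × B)} (hH : H ∈ boxProd A B) : IsBiIdeal A B H := by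
  obtain ⟨F, -, rfl⟩ := hH
  refine ⟨?_, ?_, ?_, ?_⟩
  · intro p q h1 h2 hq
    simp only [Set.mem_iInter] at hq ⊢
    exact fun r hr => (isBiIdeal_boxe r.1 r.2).1 p q h1 h2 (hq r hr)
  · intro p hp
    simp only [Set.mem_iInter]
    exact fun r _ => (isBiIdeal_boxe r.1 r.2).2.1 hp
  · intro a b₀ b₁ h h'
    simp only [Set.mem_iInter] at h h' ⊢
    exact fun r hr => (isBiIdeal_boxe r.1 r.2).2.2.1 _ _ _ (h r hr) (h' r hr)
  · intro a₀ a₁ b h h'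
    simp only [Set.mem_iInter] at h h' ⊢
    exact fun r hr => (isBiIdeal_boxe r.1 r.2).2.2.2 _ _ _ (h r hr) (h' r hr)

lemma mem_pureT_self (a : A) (b : B) : (a, b) ∈ pureT A B a b := Or.inl ⟨le_rfl, le_rfl⟩

lemma IsBiIdeal.pureT_subset {I : Set (A × B)} (hI : IsBiIdeal A B I) {p : A × B} (hp : p ∈ I) :
    pureT A B p.1 p.2 ⊆ I := by
  rintro q (⟨h1, h2⟩ | h)
  · exact hI.1 q p h1 h2 hp
  · exact hI.2.1 h

lemma IsBiIdeal.iUnion_pureT_subset_iff {I : Set (A × B)} (hI : IsBiIdeal A B I)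
    (F : Finset (A × B)) : (⋃ p ∈ F, pureT A B p.1 p.2) ⊆ I ↔ (F : Set (A × B)) ⊆ I := by
  simp only [Set.iUnion_subset_iff]
  exact ⟨fun h p hp => h p hp (mem_pureT_self _ _), fun h p hp => hI.pureT_subset (h hp)⟩

lemma pureT_inter_boxe (a c : A) (b d : B) :
    pureT A B a b ∩ boxe A B c d = pureT A B (a ⊓ c) b ∪ pureT A B a (b ⊓ d) := by
  ext ⟨x, y⟩
  have hbot : (x, y) ∈ botPairs A B → (x, y) ∈ boxe A B c d := fun h => (isBiIdeal_boxe c d).2.1 h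
  simp only [pureT, boxe, Set.mem_inter_iff, Set.mem_union, Set.mem_ofPred_eq, le_inf_iff] at hbot ⊢
  tauto

lemma exists_union_iInter_boxe (a : A) (b : B) (F : Finset (A × B)) :
    ∃ G : Finset (A × B),
      pureT A B a b ∩ ⋂ p ∈ F, boxe A B p.1 p.2 = ⋃ p ∈ G, pureT A B p.1 p.2 := by
  classical
  induction F using Finset.induction_on with
  | empty => exact ⟨{(a, b)}, by simp⟩
  | insert r F _ ih =>
    obtain ⟨G, hG⟩ := ih
    refine ⟨G.image (fun p => (p.1 ⊓ r.1, p.2)) ∪ G.image (fun p => (p.1, p.2 ⊓ r.2)), ?_⟩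
    rw [Finset.set_biInter_insert, Set.inter_comm (boxe A B _ _), ← Set.inter_assoc, hG,
      Finset.set_biUnion_union, Finset.set_biUnion_finset_image, Finset.set_biUnion_finset_image,
      Set.iUnion₂_inter]
    simp only [pureT_inter_boxe, Set.iUnion_union_distrib]

lemma exists_union_of_mem_ltens {H : Set (A × B)} (hH : H ∈ ltens A B) :
    ∃ G : Finset (A × B), H = ⋃ p ∈ G, pureT A B p.1 p.2 := by
  obtain ⟨⟨F, -, rfl⟩, a, b, hab⟩ := hH
  obtain ⟨G, hG⟩ := exists_union_iInter_boxe a b F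
  exact ⟨G, by rw [← hG, Set.inter_eq_right.2 hab]⟩

lemma inter_mem_ltens {H K : Set (A × B)} (hH : H ∈ ltens A B) (hK : K ∈ ltens A B) :
    H ∩ K ∈ ltens A B := by
  classical
  obtain ⟨⟨F, hF, rfl⟩, a, b, hab⟩ := hH
  obtain ⟨⟨G, -, rfl⟩, -⟩ := hK
  exact ⟨⟨F ∪ G, hF.mono Finset.subset_union_left, (Finset.set_biInter_inter _ _ _).symm⟩,
    a, b, Set.inter_subset_left.trans hab⟩

/-- An intersection of boxes is confined as soon as `a □ 0` and `0 □ b` occur among them. -/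
lemma boxe_bot_inter_subset (a : A) (b : B) :
    boxe A B a ⊥ ∩ boxe A B ⊥ b ⊆ pureT A B a b := by
  rintro ⟨x, y⟩ ⟨h, h'⟩
  simp only [pureT, botPairs, boxe, Set.mem_union, Set.mem_ofPred_eq, le_bot_iff] at h h' ⊢
  tauto

/-- For `a₀ ≤ a₁` and `b₁ ≤ b₀`, the mixed tensor is `(a₁ □ 0) ∩ (0 □ b₀) ∩ (a₀ □ b₁)`. -/
lemma mixed_mem_ltens {a₀ a₁ : A} {b₀ b₁ : B} (ha : a₀ ≤ a₁) (hb : b₁ ≤ b₀) :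
    pureT A B a₀ b₀ ∪ pureT A B a₁ b₁ ∈ ltens A B := by
  classical
  have key : pureT A B a₀ b₀ ∪ pureT A B a₁ b₁ =
      boxe A B a₁ ⊥ ∩ (boxe A B ⊥ b₀ ∩ boxe A B a₀ b₁) := by
    apply subset_antisymm
    · have h1 := isBiIdeal_boxe (A := A) (B := B) a₁ ⊥
      have h2 := isBiIdeal_boxe (A := A) (B := B) ⊥ b₀
      have h3 := isBiIdeal_boxe (A := A) (B := B) a₀ b₁
      refine Set.union_subset
        (Set.subset_inter (h1.pureT_subset (p := (a₀, b₀)) (Or.inl ha))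
          (Set.subset_inter (h2.pureT_subset (p := (a₀, b₀)) (Or.inr le_rfl))
            (h3.pureT_subset (p := (a₀, b₀)) (Or.inl le_rfl))))
        (Set.subset_inter (h1.pureT_subset (p := (a₁, b₁)) (Or.inl le_rfl))
          (Set.subset_inter (h2.pureT_subset (p := (a₁, b₁)) (Or.inr hb))
            (h3.pureT_subset (p := (a₁, b₁)) (Or.inr le_rfl))))
    · rw [← Set.inter_assoc]
      refine (Set.inter_subset_inter_left _ (boxe_bot_inter_subset a₁ b₀)).trans ?_
      rw [pureT_inter_boxe, inf_eq_right.2 ha, inf_eq_right.2 hb]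
  refine ⟨⟨{(a₁, ⊥), (⊥, b₀), (a₀, b₁)}, by simp, ?_⟩, a₁, b₀, ?_⟩
  · rw [key, Finset.set_biInter_insert, Finset.set_biInter_insert, Finset.set_biInter_singleton]
  · rw [key, ← Set.inter_assoc]
    exact Set.inter_subset_left.trans (boxe_bot_inter_subset a₁ b₀)

/-- Every finite set is contained in a least element of `A ⊠ B`. -/
lemma exists_hull (G : Finset (A × B)) :
    ∃ Z ∈ ltens A B, (G : Set (A × B)) ⊆ Z ∧ ∀ W ∈ ltens A B, (G : Set (A × B)) ⊆ W → Z ⊆ W := by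
  classical
  let f : Finset (A × B) → A × B := fun S => (S.sup Prod.fst, (G \ S).sup Prod.snd)
  have hmem : ∀ q : A × B, q ∈ (⋂ p ∈ G.powerset.image f, boxe A B p.1 p.2) ↔
      ∀ S ⊆ G, q ∈ boxe A B (S.sup Prod.fst) ((G \ S).sup Prod.snd) := by
    intro q
    simp [f]
  refine ⟨⋂ p ∈ G.powerset.image f, boxe A B p.1 p.2,
    ⟨⟨_, ⟨f ∅, Finset.mem_image_of_mem f (Finset.empty_mem_powerset G)⟩, rfl⟩,
      G.sup Prod.fst, G.sup Prod.snd, ?_⟩, ?_, ?_⟩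
  · intro q hq
    rw [hmem] at hq
    have h1 := hq G subset_rfl
    have h2 := hq ∅ (Finset.empty_subset G)
    rw [sdiff_self] at h1
    rw [Finset.sdiff_empty] at h2
    exact boxe_bot_inter_subset _ _ ⟨h1, h2⟩
  · intro q hq
    rw [hmem]
    intro S _
    by_cases hS : q ∈ S
    · exact Or.inl (Finset.le_sup (f := Prod.fst) hS)
    · exact Or.inr (Finset.le_sup (f := Prod.snd) (Finset.mem_sdiff.2 ⟨hq, hS⟩))
  · rintro W ⟨⟨F, -, rfl⟩, -⟩ hG q hq
    rw [hmem] at hq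
    simp only [Set.mem_iInter]
    intro r hr
    -- Split `G` according to which side of the box `r.1 □ r.2` an element satisfies.
    rcases hq (G.filter fun p => p.1 ≤ r.1) (Finset.filter_subset _ _) with h | h
    · exact Or.inl (h.trans (Finset.sup_le fun p hp => (Finset.mem_filter.1 hp).2))
    · refine Or.inr (h.trans (Finset.sup_le fun p hp => ?_))
      rw [Finset.mem_sdiff, Finset.mem_filter] at hp
      have hp' := hG hp.1
      simp only [Set.mem_iInter] at hp'
      exact (hp' r hr).resolve_left fun h' => hp.2 ⟨hp.1, h'⟩

lemma exists_isLUB_ltens (H K : {X // X ∈ ltens A B}) : ∃ z, IsLUB {H, K} z := by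
  classical
  obtain ⟨F, hF⟩ := exists_union_of_mem_ltens H.2
  obtain ⟨G, hG⟩ := exists_union_of_mem_ltens K.2
  obtain ⟨Z, hZ, hsub, hmin⟩ := exists_hull (F ∪ G)
  have hsup : ∀ W ∈ ltens A B,
      (H.1 ⊆ W ∧ K.1 ⊆ W ↔ ((F ∪ G : Finset (A × B)) : Set (A × B)) ⊆ W) := by
    intro W hW
    have hI := isBiIdeal_of_mem_boxProd hW.1
    rw [hF, hG, hI.iUnion_pureT_subset_iff, hI.iUnion_pureT_subset_iff, Finset.coe_union,
      Set.union_subset_iff]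
  refine ⟨⟨Z, hZ⟩, ?_, ?_⟩
  · rintro X (rfl | rfl)
    · exact ((hsup Z hZ).2 hsub).1
    · exact ((hsup Z hZ).2 hsub).2
  · intro W hW
    exact hmin W.1 W.2 ((hsup W.1 W.2).1 ⟨hW (Or.inl rfl), hW (Or.inr rfl)⟩)

lemma exists_isGLB_ltens (H K : {X // X ∈ ltens A B}) : ∃ w, IsGLB {H, K} w := by
  refine ⟨⟨H.1 ∩ K.1, inter_mem_ltens H.2 K.2⟩, ?_, ?_⟩
  · rintro X (rfl | rfl)
    · exact Set.inter_subset_left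
    · exact Set.inter_subset_right
  · intro W hW
    exact Set.subset_inter (hW (Or.inl rfl)) (hW (Or.inr rfl))

lemma isFGBiIdeal_of_mem_ltens {H : Set (A × B)} (hH : H ∈ ltens A B) : IsFGBiIdeal A B H := by
  have hI := isBiIdeal_of_mem_boxProd hH.1
  obtain ⟨G, hG⟩ := exists_union_of_mem_ltens hH
  refine ⟨G, ⟨hI, (hI.iUnion_pureT_subset_iff G).1 hG.ge⟩, ?_⟩
  rintro I ⟨hI', hGI⟩
  rw [hG]
  exact (hI'.iUnion_pureT_subset_iff G).2 hGI

lemma ltens_subset_of_mixed_of_inter {C : Set (Set (A × B))}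
    (hmix : ∀ (a₀ a₁ : A) (b₀ b₁ : B), a₀ ≤ a₁ → b₁ ≤ b₀ →
      pureT A B a₀ b₀ ∪ pureT A B a₁ b₁ ∈ C)
    (hinter : ∀ X ∈ C, ∀ Y ∈ C, X ∩ Y ∈ C) : ltens A B ⊆ C := by
  classical
  rintro H ⟨⟨F, -, rfl⟩, a, b, hab⟩
  have key : ∀ F : Finset (A × B), pureT A B a b ∩ ⋂ p ∈ F, boxe A B p.1 p.2 ∈ C := by
    intro F
    induction F using Finset.induction_on with
    | empty =>
      simpa using hmix a a b b le_rfl le_rfl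
    | insert r F _ ih =>
      rw [Finset.set_biInter_insert, Set.inter_inter_distrib_left, pureT_inter_boxe]
      exact hinter _ (hmix _ _ _ _ inf_le_left inf_le_left) _ ih
  rw [← Set.inter_eq_right.2 hab]
  exact key F

variable (A B)

/-- For lattices `A` and `B` with zero, `A ⊠ B` is a capped sub-tensor product of
`A` and `B`, and it is the smallest one with respect to containment. -/
theorem ltens_smallest_capped_subTensorProd :
    (∀ H ∈ ltens A B, IsFGBiIdeal A B H ∧
      ∃ F : Finset (A × B), H = ⋃ p ∈ F, pureT A B p.1 p.2) ∧
    (∀ (a₀ a₁ : A) (b₀ b₁ : B), a₀ ≤ a₁ → b₁ ≤ b₀ →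
      pureT A B a₀ b₀ ∪ pureT A B a₁ b₁ ∈ ltens A B) ∧
    (∀ H ∈ ltens A B, ∀ K ∈ ltens A B, H ∩ K ∈ ltens A B) ∧
    (∀ H K : {X // X ∈ ltens A B}, (∃ z, IsLUB {H, K} z) ∧ (∃ w, IsGLB {H, K} w)) ∧
    (∀ C : Set (Set (A × B)), SubTensorProd A B C → Capped A B C → ltens A B ⊆ C) := by
  exact ⟨fun _ hH => ⟨isFGBiIdeal_of_mem_ltens hH, exists_union_of_mem_ltens hH⟩,
    fun _ _ _ _ => mixed_mem_ltens,
    fun _ hH _ hK => inter_mem_ltens hH hK,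
    fun H K => ⟨exists_isLUB_ltens H K, exists_isGLB_ltens H K⟩,
    fun _ hC _ => ltens_subset_of_mixed_of_inter hC.2.1 hC.2.2.1⟩
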